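/- Let d ∈ ℕ and let L : ℝ⟨X⟩_d → ℝ be a tracial linear functional. Then there exist k ∈ ℕ, scalars λ₁, …, λ_k ∈ ℝ, sizes n₁, …, n_k ∈ ℕ with n_ℓ ≤ max(d, 1) for all ℓ, and tuples A_ℓ ∈ M_{n_ℓ}(ℝ)^g such that L(p) = Σ_{ℓ=1}^k λ_ℓ · tr(p(A_ℓ)) for every p ∈ ℝ⟨X⟩_d. -/

import Mathlib

/-- The subspace `F⟨X⟩_d` of the free algebra spanned by words of length at most `d`. -/
def wordSpan (F : Type*) [Field F] (g d : ℕ) : Submodule F (FreeAlgebra F (Fin g)) :=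
  Submodule.span F
    {x : FreeAlgebra F (Fin g) |
      ∃ w : List (Fin g), w.length ≤ d ∧ x = (w.map (FreeAlgebra.ι F)).prod}

lemma word_mem_wordSpan (F : Type*) [Field F] {g d : ℕ} (w : List (Fin g))
    (hw : w.length ≤ d) : (w.map (FreeAlgebra.ι F)).prod ∈ wordSpan F g d :=
  Submodule.subset_span ⟨w, hw, rfl⟩

/-- A linear functional on `F⟨X⟩_d` is tracial if `L (u * v) = L (v * u)` for all
words `u, v` with `|u| + |v| ≤ d`. -/
def IsTracial {F : Type*} [Field F] {g d : ℕ} (L : wordSpan F g d →ₗ[F] F) : Prop :=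
  ∀ (u v : List (Fin g)) (h : u.length + v.length ≤ d),
    L ⟨((u ++ v).map (FreeAlgebra.ι F)).prod,
        word_mem_wordSpan F (u ++ v) (by rw [List.length_append]; exact h)⟩ =
    L ⟨((v ++ u).map (FreeAlgebra.ι F)).prod,
        word_mem_wordSpan F (v ++ u) (by rw [List.length_append]; omega)⟩

section Cyc
open scoped Fin.NatCast Fin.CommRing

/-- The cyclic word of length `n` read off `w` starting at `j`. -/
def cycWord {g m : ℕ} (w : Fin (m+1) → Fin g) : Fin (m+1) → ℕ → List (Fin g)
  | _, 0 => []
  | j, n+1 => w j :: cycWord w (j+1) n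

lemma cycWord_length {g m : ℕ} (w : Fin (m+1) → Fin g) (j : Fin (m+1)) (n : ℕ) :
    (cycWord w j n).length = n := by
  induction n generalizing j with
  | zero => rfl
  | succ n ih => simp [cycWord, ih]

lemma cycWord_add {g m : ℕ} (w : Fin (m+1) → Fin g) (j : Fin (m+1)) (a b : ℕ) :
    cycWord w j (a + b) = cycWord w j a ++ cycWord w (j + (a : Fin (m+1))) b := by
  induction a generalizing j with
  | zero => simp [cycWord]
  | succ a ih =>
    rw [Nat.add_right_comm a 1 b]
    simp only [cycWord, List.cons_append, ih, Nat.cast_add, Nat.cast_one]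
    rw [add_assoc, add_comm (1 : Fin (m+1))]

lemma cycWord_get {g m : ℕ} (w : Fin (m+1) → Fin g) (j : Fin (m+1)) (n t : ℕ)
    (h : t < (cycWord w j n).length) :
    (cycWord w j n)[t] = w (j + (t : Fin (m+1))) := by
  induction n generalizing j t with
  | zero => simp [cycWord] at h
  | succ n ih =>
    cases t with
    | zero => simp [cycWord]
    | succ t =>
      simp only [cycWord, List.getElem_cons_succ, Nat.cast_add, Nat.cast_one]
      rw [ih, add_assoc, add_comm (1 : Fin (m+1))]

lemma eq_cycWord_iff {g m : ℕ} (w : Fin (m+1) → Fin g) (j : Fin (m+1)) (v : List (Fin g))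
    (hv : v.length = m+1) :
    v = cycWord w j (m+1) ↔ w = fun s => v.get ((s - j).cast hv.symm) := by
  constructor
  · intro h
    funext s
    subst h
    simp [cycWord_get]
  · intro h
    apply List.ext_getElem
    · rw [hv, cycWord_length]
    · intro t h1 h2
      rw [cycWord_get, h]
      have : t < m + 1 := by omega
      simp [Fin.val_natCast, Nat.mod_eq_of_lt this]

/-- Cyclic shift matrices attached to `w`. -/
def cycMat {g m : ℕ} (w : Fin (m+1) → Fin g) (i : Fin g) :
    Matrix (Fin (m+1)) (Fin (m+1)) ℝ :=
  fun j k => if i = w j ∧ k = j + 1 then 1 else 0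

lemma cycMat_prod {g m : ℕ} (w : Fin (m+1) → Fin g) (v : List (Fin g)) (j k : Fin (m+1)) :
    (v.map (cycMat w)).prod j k =
      if v = cycWord w j v.length ∧ k = j + (v.length : Fin (m+1)) then 1 else 0 := by
  induction v generalizing j with
  | nil => simp [cycWord, Matrix.one_apply, eq_comm]
  | cons a v ih =>
    rw [List.map_cons, List.prod_cons, Matrix.mul_apply, Finset.sum_eq_single (j+1)]
    · rw [ih]
      simp only [cycMat, List.length_cons, cycWord, List.cons.injEq, and_true, Nat.cast_add,
        Nat.cast_one]
      rw [add_assoc, add_comm (1 : Fin (m+1))]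
      by_cases h : a = w j <;> simp [h]
    · intro l _ hl
      simp [cycMat, hl]
    · simp

/-- Trace of a word. -/
def trW {g n : ℕ} (A : Fin g → Matrix (Fin n) (Fin n) ℝ) (v : List (Fin g)) : ℝ :=
  Matrix.trace (v.map A).prod

lemma trW_cyc_full {g m : ℕ} (w : Fin (m+1) → Fin g) (v : List (Fin g))
    (hv : v.length = m+1) :
    trW (cycMat w) v = ∑ j, if v = cycWord w j (m+1) then (1:ℝ) else 0 := by
  simp only [trW, Matrix.trace, Matrix.diag, cycMat_prod, hv]
  refine Finset.sum_congr rfl fun j _ => ?_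
  have : ((m+1 : ℕ) : Fin (m+1)) = 0 := Fin.natCast_self _
  rw [this]
  simp

lemma trW_cyc_short {g m : ℕ} (w : Fin (m+1) → Fin g) (v : List (Fin g))
    (h1 : 1 ≤ v.length) (hv : v.length ≤ m) :
    trW (cycMat w) v = 0 := by
  simp only [trW, Matrix.trace, Matrix.diag, cycMat_prod]
  refine Finset.sum_eq_zero fun j _ => ?_
  rw [if_neg]
  rintro ⟨-, h⟩
  have h0 : ((v.length : ℕ) : Fin (m+1)) = 0 := by simpa using h.symm
  have := congrArg Fin.val h0
  rw [Fin.val_natCast, Nat.mod_eq_of_lt (by omega)] at this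
  simp at this
  subst this
  simp at h1

lemma cycWord_rot {g m : ℕ} (f : List (Fin g) → ℝ) (hf : ∀ u v, f (u ++ v) = f (v ++ u))
    (w : Fin (m+1) → Fin g) (j : Fin (m+1)) :
    f (cycWord w j (m+1)) = f (cycWord w 0 (m+1)) := by
  have hj := j.2
  have e1 : m + 1 = j.val + (m + 1 - j.val) := by omega
  have e2 : m + 1 = (m + 1 - j.val) + j.val := by omega
  have a1 : cycWord w 0 (m+1) = cycWord w 0 j.val ++ cycWord w j (m+1-j.val) := by
    have := cycWord_add w 0 j.val (m + 1 - j.val)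
    rw [← e1] at this
    rw [this]
    simp
  have a2 : cycWord w j (m+1) = cycWord w j (m+1-j.val) ++ cycWord w 0 j.val := by
    have := cycWord_add w j (m + 1 - j.val) j.val
    rw [← e2] at this
    rw [this]
    congr 2
    have : ((j.val + (m + 1 - j.val) : ℕ) : Fin (m+1)) = 0 := by
      rw [← e1]; exact Fin.natCast_self _
    rw [Nat.cast_add] at this
    simpa using this
  rw [a1, a2, hf]

/-- The set of word-trace functions of size at most `N`. -/
def trSet (g N : ℕ) : Set (List (Fin g) → ℝ) :=
  {f | ∃ n, n ≤ N ∧ ∃ A : Fin g → Matrix (Fin n) (Fin n) ℝ, f = trW A}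

lemma span_tracial {g N : ℕ} (f : List (Fin g) → ℝ) (hf : f ∈ Submodule.span ℝ (trSet g N)) :
    ∀ u v, f (u ++ v) = f (v ++ u) := by
  induction hf using Submodule.span_induction with
  | mem x h =>
    obtain ⟨n, -, A, rfl⟩ := h
    intro u v
    simp only [trW, List.map_append, List.prod_append]
    exact Matrix.trace_mul_comm _ _
  | zero => intro u v; rfl
  | add x y _ _ hx hy => intro u v; simp [hx u v, hy u v]
  | smul a x _ hx => intro u v; simp [hx u v]

lemma cyc_sum {g m : ℕ} (f : List (Fin g) → ℝ) (hf : ∀ u v, f (u ++ v) = f (v ++ u))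
    (v : List (Fin g)) (hv : v.length = m+1) :
    ∑ w : Fin (m+1) → Fin g, (f (cycWord w 0 (m+1)) / (m+1)) * trW (cycMat w) v = f v := by
  simp only [trW_cyc_full _ v hv, Finset.mul_sum]
  rw [Finset.sum_comm]
  have : ∀ j : Fin (m+1), ∑ w : Fin (m+1) → Fin g, (f (cycWord w 0 (m+1)) / (m+1)) *
      (if v = cycWord w j (m+1) then (1:ℝ) else 0) = f v / (m+1) := by
    intro j
    rw [Finset.sum_eq_single (fun s => v.get ((s - j).cast hv.symm))]
    · have := (eq_cycWord_iff (fun s => v.get ((s - j).cast hv.symm)) j v hv).2 rfl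
      rw [if_pos this, mul_one, ← cycWord_rot f hf _ j, ← this]
    · intro w _ hw
      rw [if_neg, mul_zero]
      rwa [eq_cycWord_iff w j v hv]
    · simp
  rw [Finset.sum_congr rfl fun j _ => this j]
  simp
  field_simp

lemma approx {g N : ℕ} (f : List (Fin g) → ℝ) (hf : ∀ u v, f (u ++ v) = f (v ++ u))
    (m : ℕ) (hm : m ≤ N) :
    ∃ ψ ∈ Submodule.span ℝ (trSet g N), ∀ v : List (Fin g), 1 ≤ v.length → v.length ≤ m →
      f v = ψ v := by
  induction m with
  | zero => exact ⟨0, Submodule.zero_mem _, fun v h1 h2 => by omega⟩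
  | succ m ih =>
    obtain ⟨ψ, hψ, h⟩ := ih (by omega)
    have ht : ∀ u v, (f - ψ) (u ++ v) = (f - ψ) (v ++ u) := fun u v => by
      simp [hf u v, span_tracial ψ hψ u v]
    refine ⟨ψ + ∑ w : Fin (m+1) → Fin g,
      ((f - ψ) (cycWord w 0 (m+1)) / (m+1)) • trW (cycMat w), ?_, ?_⟩
    · refine Submodule.add_mem _ hψ (Submodule.sum_mem _ fun w _ => Submodule.smul_mem _ _ ?_)
      exact Submodule.subset_span ⟨m+1, hm, cycMat w, rfl⟩
    · intro v h1 h2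
      rw [Pi.add_apply, Finset.sum_apply]
      simp only [Pi.smul_apply, smul_eq_mul]
      rcases Nat.lt_or_ge v.length (m+1) with h3 | h3
      · rw [Finset.sum_eq_zero, h v h1 (by omega), add_zero]
        intro w _
        rw [trW_cyc_short w v h1 (by omega), mul_zero]
      · rw [cyc_sum (f - ψ) ht v (by omega)]
        simp

lemma approx_full {g d : ℕ} (f : List (Fin g) → ℝ) (hf : ∀ u v, f (u ++ v) = f (v ++ u)) :
    ∃ ψ ∈ Submodule.span ℝ (trSet g (max d 1)), ∀ v : List (Fin g), v.length ≤ d →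
      f v = ψ v := by
  obtain ⟨ψ, hψ, h⟩ := approx (N := max d 1) f hf d (le_max_left _ _)
  refine ⟨ψ + (f [] - ψ []) • trW (n := 1) (fun _ => 0), ?_, ?_⟩
  · exact Submodule.add_mem _ hψ (Submodule.smul_mem _ _
      (Submodule.subset_span ⟨1, le_max_right _ _, _, rfl⟩))
  · intro v hv
    cases v with
    | nil => simp [trW]
    | cons a v =>
      rw [Pi.add_apply, ← h _ (by simp) hv]
      simp [trW]

end Cyc

/-- Every tracial linear functional on `ℝ⟨X⟩_d` is a linear combination of the
functionals `p ↦ tr (p A)` for tuples of real matrices `A` of sizes at most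
`max d 1`. -/
theorem tracial_functional_is_combination_of_small_traces (g d : ℕ)
    (L : wordSpan ℝ g d →ₗ[ℝ] ℝ) (hL : IsTracial L) :
    ∃ (k : ℕ) (lam : Fin k → ℝ) (sz : Fin k → ℕ)
      (A : (ℓ : Fin k) → Fin g → Matrix (Fin (sz ℓ)) (Fin (sz ℓ)) ℝ),
      (∀ ℓ : Fin k, sz ℓ ≤ max d 1) ∧
      ∀ p : wordSpan ℝ g d,
        L p = ∑ ℓ : Fin k,
          lam ℓ * Matrix.trace (FreeAlgebra.lift ℝ (A ℓ) (p : FreeAlgebra ℝ (Fin g))) := by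
  classical
  let f : List (Fin g) → ℝ := fun v =>
    if h : v.length ≤ d then L ⟨(v.map (FreeAlgebra.ι ℝ)).prod, word_mem_wordSpan ℝ v h⟩ else 0
  have hf : ∀ u v, f (u ++ v) = f (v ++ u) := by
    intro u v
    by_cases h : u.length + v.length ≤ d
    · have h1 : (u ++ v).length ≤ d := by rw [List.length_append]; exact h
      have h2 : (v ++ u).length ≤ d := by rw [List.length_append]; omega
      simp only [f]
      rw [dif_pos h1, dif_pos h2]
      exact hL u v h
    · have h1 : ¬ (u ++ v).length ≤ d := by rw [List.length_append]; exact h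
      have h2 : ¬ (v ++ u).length ≤ d := by rw [List.length_append]; omega
      simp only [f]
      rw [dif_neg h1, dif_neg h2]
  obtain ⟨ψ, hψ, hfψ⟩ := approx_full (d := d) f hf
  obtain ⟨k, lam, G, hG⟩ := Submodule.mem_span_set'.1 hψ
  choose sz hsz A hA using fun i => (G i).2
  refine ⟨k, lam, sz, A, hsz, ?_⟩
  rintro ⟨p, hp⟩
  have hp' : p ∈ Submodule.span ℝ {x : FreeAlgebra ℝ (Fin g) |
      ∃ w : List (Fin g), w.length ≤ d ∧ x = (w.map (FreeAlgebra.ι ℝ)).prod} := hp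
  induction hp' using Submodule.span_induction with
  | mem x h =>
    obtain ⟨w, hw, rfl⟩ := h
    have h1 := hfψ w hw
    simp only [f] at h1
    rw [dif_pos hw] at h1
    rw [h1, ← hG, Finset.sum_apply]
    refine Finset.sum_congr rfl fun i _ => ?_
    rw [Pi.smul_apply, hA i, smul_eq_mul, trW, map_list_prod, List.map_map]
    congr 4
    funext a
    simp
  | zero =>
    have : (⟨0, hp⟩ : wordSpan ℝ g d) = 0 := rfl
    rw [this]
    simp
  | add x y hx hy ihx ihy =>
    have : (⟨x + y, hp⟩ : wordSpan ℝ g d) = ⟨x, hx⟩ + ⟨y, hy⟩ := rfl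
    rw [this, map_add, ihx hx, ihy hy, ← Finset.sum_add_distrib]
    refine Finset.sum_congr rfl fun i _ => ?_
    simp [mul_add]
  | smul a x hx ihx =>
    have : (⟨a • x, hp⟩ : wordSpan ℝ g d) = a • ⟨x, hx⟩ := rfl
    rw [this, map_smul, ihx hx, smul_eq_mul, Finset.mul_sum]
    refine Finset.sum_congr rfl fun i _ => ?_
    simp
    ring
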